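/- Along the interpolation H_{N,t} = √t H_N + √(1−t) H'_N, the derivative of φ_N(t) := (1/N) E[log Z_N(t)] equals (β²/2) Σ_{|x−y|=1} α_x α_y (1−q_x)(1−q_y) − (β²/2) Σ_{|x−y|=1} α_x α_y E⟨(q_x − R^{(x)})(q_y − R^{(y)})⟩_t. -/

import Mathlib

open MeasureTheory ProbabilityTheory Real Set
open scoped BigOperators

noncomputable section

namespace DRBM

/-- `±1` spin attached to a Boolean. -/
def sg (s : Bool) : ℝ := if s then 1 else -1

/-- Configurations: `ν` layers, each using the first `Nv x` of `N` sites. -/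
abbrev Config (ν N : ℕ) := Fin ν → Fin N → Bool

/-- Quenched weights: `ξ x i j` couples site `i` of layer `x` with site `j`
of layer `x+1`. -/
abbrev Weights (ν N : ℕ) := Fin ν → Fin N → Fin N → ℝ

/-- External Gaussian fields for the interpolation. -/
abbrev Fields (ν N : ℕ) := Fin ν → Fin N → ℝ

/-- i.i.d. standard Gaussian law of the weights. -/
def μW (ν N : ℕ) : Measure (Weights ν N) :=
  Measure.pi fun _ => Measure.pi fun _ => Measure.pi fun _ => gaussianReal 0 1

/-- i.i.d. standard Gaussian law of the fields. -/
def μF (ν N : ℕ) : Measure (Fields ν N) :=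
  Measure.pi fun _ => Measure.pi fun _ => gaussianReal 0 1

/-- The deep RBM Hamiltonian
`H_N(σ) = −Σ_{x} Σ_{i<N_x, j<N_{x+1}} ξ^x_{ij}/√N σ^x_i σ^{x+1}_j`. -/
def ham (ν N : ℕ) (Nv : Fin ν → ℕ) (ξ : Weights ν N) (σ : Config ν N) : ℝ :=
  - ∑ x : Fin ν, ∑ y : Fin ν,
      (if (y : ℕ) = (x : ℕ) + 1 then
        ∑ i : Fin N, ∑ j : Fin N,
          (if (i : ℕ) < Nv x ∧ (j : ℕ) < Nv y then
            ξ x i j / Real.sqrt N * sg (σ x i) * sg (σ y j)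
          else 0)
      else 0)

/-- `Qv x = Σ_{|y−x|=1} α_y q_y`. -/
def Qv (ν : ℕ) (α q : Fin ν → ℝ) (x : Fin ν) : ℝ :=
  ∑ y : Fin ν,
    (if (y : ℕ) = (x : ℕ) + 1 ∨ (y : ℕ) + 1 = (x : ℕ) then α y * q y else 0)

/-- The one-body interpolating Hamiltonian
`H'_N(σ) = Σ_x √(Σ_{|y−x|=1} α_y q_y) Σ_i η^x_i σ^x_i`. -/
def ham' (ν N : ℕ) (Nv : Fin ν → ℕ) (α q : Fin ν → ℝ) (η : Fields ν N)
    (σ : Config ν N) : ℝ :=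
  ∑ x : Fin ν, Real.sqrt (Qv ν α q x) *
    ∑ i : Fin N, (if (i : ℕ) < Nv x then η x i * sg (σ x i) else 0)

/-- Interpolating Hamiltonian `H_{N,t} = √t H_N + √(1−t) H'_N`. -/
def hamT (ν N : ℕ) (Nv : Fin ν → ℕ) (α q : Fin ν → ℝ) (t : ℝ)
    (ξ : Weights ν N) (η : Fields ν N) (σ : Config ν N) : ℝ :=
  Real.sqrt t * ham ν N Nv ξ σ + Real.sqrt (1 - t) * ham' ν N Nv α q η σ

/-- Bias term `Σ_x b_x Σ_i σ^x_i`. -/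
def bias (ν N : ℕ) (Nv : Fin ν → ℕ) (b : Fin ν → ℝ) (σ : Config ν N) : ℝ :=
  ∑ x : Fin ν, b x * ∑ i : Fin N, (if (i : ℕ) < Nv x then sg (σ x i) else 0)

/-- Boltzmann weight of a configuration along the interpolation. -/
def bw (ν N : ℕ) (Nv : Fin ν → ℕ) (α q : Fin ν → ℝ) (β t : ℝ)
    (b : Fin ν → ℝ) (ξ : Weights ν N) (η : Fields ν N) (σ : Config ν N) : ℝ :=
  Real.exp (-β * hamT ν N Nv α q t ξ η σ + bias ν N Nv b σ)

/-- Interpolating partition function `Z_N(t) = Ê_σ e^{−βH_{N,t}}` (the prior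
`Ê` being the product of `±1` biased Bernoulli averages). -/
def Z (ν N : ℕ) (Nv : Fin ν → ℕ) (α q : Fin ν → ℝ) (β t : ℝ)
    (b : Fin ν → ℝ) (ξ : Weights ν N) (η : Fields ν N) : ℝ :=
  (∑ σ : Config ν N, bw ν N Nv α q β t b ξ η σ) / 2 ^ (ν * N)

/-- Two-replica Gibbs average `⟨f⟩_t`. -/
def gibbs2 (ν N : ℕ) (Nv : Fin ν → ℕ) (α q : Fin ν → ℝ) (β t : ℝ)
    (b : Fin ν → ℝ) (ξ : Weights ν N) (η : Fields ν N)
    (f : Config ν N → Config ν N → ℝ) : ℝ :=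
  (∑ σ : Config ν N, ∑ τ : Config ν N,
      f σ τ * bw ν N Nv α q β t b ξ η σ * bw ν N Nv α q β t b ξ η τ) /
    (∑ σ : Config ν N, bw ν N Nv α q β t b ξ η σ) ^ 2

/-- Layer-`x` overlap `R^{(x)}(σ,τ) = (σ^{(x)},τ^{(x)})/N_x`. -/
def ovl (ν N : ℕ) (Nv : Fin ν → ℕ) (x : Fin ν)
    (σ τ : Config ν N) : ℝ :=
  (∑ i : Fin N, (if (i : ℕ) < Nv x then sg (σ x i) * sg (τ x i) else 0)) /
    (Nv x : ℝ)

/-- Sum over (unordered) adjacent pairs of layers `Σ_{|x−y|=1}`. -/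
def adjSum (ν : ℕ) (F : Fin ν → Fin ν → ℝ) : ℝ :=
  ∑ x : Fin ν, ∑ y : Fin ν, (if (y : ℕ) = (x : ℕ) + 1 then F x y else 0)

/-! one dimensional Gaussian integration by parts -/
lemma stein_one (f f' : ℝ → ℝ) (M : ℝ) (hf : ∀ x, HasDerivAt f (f' x) x)
    (hb : ∀ x, |f x| ≤ M) (hb' : ∀ x, |f' x| ≤ M) :
    ∫ x, x * f x ∂(gaussianReal 0 1) = ∫ x, f' x ∂(gaussianReal 0 1) := by
  have hfc : Continuous f := continuous_iff_continuousAt.2 fun x => (hf x).continuousAt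
  have hfm : Measurable f' := by
    have : f' = deriv f := funext fun x => (hf x).deriv.symm
    rw [this]; exact measurable_deriv f
  rw [integral_gaussianReal_eq_integral_smul one_ne_zero,
    integral_gaussianReal_eq_integral_smul one_ne_zero]
  have hp : ∀ x : ℝ, HasDerivAt (gaussianPDFReal 0 1) (-x * gaussianPDFReal 0 1 x) x := by
    intro x
    rw [gaussianPDFReal_def]
    have h1 : HasDerivAt (fun x : ℝ => -(x - 0) ^ 2 / (2 * ((1 : NNReal) : ℝ))) (-x) x := by
      have := ((((hasDerivAt_id x).sub_const 0).pow 2).neg).div_const (2 * ((1 : NNReal) : ℝ))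
      exact this.congr_deriv (by simp; ring)
    exact ((h1.exp).const_mul ((√(2 * π * ((1 : NNReal) : ℝ)))⁻¹)).congr_deriv (by ring)
  have hpi := integrable_gaussianPDFReal 0 1
  have hxp : Integrable (fun x : ℝ => x * gaussianPDFReal 0 1 x) := by
    have h := integrable_mul_exp_neg_mul_sq (b := 1/2) (by norm_num)
    have h2 := h.const_mul ((√(2 * π * ((1 : NNReal) : ℝ)))⁻¹)
    refine h2.congr (ae_of_all _ fun x => ?_)
    simp only [gaussianPDFReal_def]
    have : -(x - 0) ^ 2 / (2 * ((1 : NNReal) : ℝ)) = -(1/2) * x ^ 2 := by simp; ring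
    rw [this]; ring
  have hA := integral_mul_deriv_eq_deriv_mul_of_integrable (u := f) (u' := f')
    (v := gaussianPDFReal 0 1) (v' := fun x => -x * gaussianPDFReal 0 1 x)
    (fun x _ => hf x) (fun x _ => hp x) ?_ ?_ ?_
  · have e1 : ∀ x, gaussianPDFReal 0 1 x • (x * f x) = -(f x * (-x * gaussianPDFReal 0 1 x)) := by
      intro x; simp; ring
    simp_rw [e1]
    rw [integral_neg, hA, neg_neg]
    congr 1; ext x; simp; ring
  · refine (Integrable.bdd_mul (c := M) (hxp.neg) hfc.aestronglyMeasurable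
      (ae_of_all _ hb)).congr (ae_of_all _ fun x => ?_)
    simp
  · exact Integrable.bdd_mul (c := M) hpi hfm.aestronglyMeasurable (ae_of_all _ hb')
  · exact Integrable.bdd_mul (c := M) hpi hfc.aestronglyMeasurable (ae_of_all _ hb)

section abs
variable {ι S : Type*} [Fintype ι] [DecidableEq ι] [Fintype S] [Nonempty S]

/-- standard Gaussian product law -/
def PG (ι : Type*) [Fintype ι] : Measure (ι → ℝ) := Measure.pi fun _ => gaussianReal 0 1

instance : IsProbabilityMeasure (PG ι) := by unfold PG; infer_instance

lemma int_coord {ι : Type*} [Fintype ι] (k : ι) : Integrable (fun g : ι → ℝ => g k) (PG ι) := by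
  have h : MeasurePreserving (Function.eval k) (PG ι) (gaussianReal 0 1) :=
    measurePreserving_eval (fun _ : ι => gaussianReal 0 1) k
  have h2 : Integrable (id : ℝ → ℝ) (gaussianReal 0 1) :=
    (memLp_id_gaussianReal 1).integrable (by simp)
  exact h.integrable_comp_of_integrable h2

lemma mp_update (k : ι) :
    MeasurePreserving (fun p : ℝ × (ι → ℝ) => Function.update p.2 k p.1)
      ((gaussianReal 0 1).prod (PG ι)) (PG ι) := by
  have hm : Measurable (fun p : ℝ × (ι → ℝ) => Function.update p.2 k p.1) := by
    rw [measurable_pi_iff]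
    intro j
    by_cases h : j = k
    · subst h; simpa using measurable_fst
    · simp only [Function.update_of_ne h]; fun_prop
  refine ⟨hm, ?_⟩
  unfold PG
  symm
  apply Measure.pi_eq
  intro s hs
  rw [Measure.map_apply hm (MeasurableSet.univ_pi hs)]
  have : (fun p : ℝ × (ι → ℝ) => Function.update p.2 k p.1) ⁻¹' (univ.pi s)
      = s k ×ˢ univ.pi (Function.update s k univ) := by
    ext ⟨x, g⟩
    simp only [mem_preimage, mem_univ_pi, mem_prod]
    constructor
    · intro h
      refine ⟨by simpa using h k, fun j => ?_⟩
      by_cases hj : j = k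
      · subst hj; simp
      · simpa [Function.update_of_ne hj] using h j
    · rintro ⟨h1, h2⟩ j
      by_cases hj : j = k
      · subst hj; simpa using h1
      · simpa [Function.update_of_ne hj] using h2 j
  rw [this, Measure.prod_prod, Measure.pi_pi]
  rw [← Finset.mul_prod_erase Finset.univ _ (Finset.mem_univ k),
    ← Finset.mul_prod_erase Finset.univ (fun i => gaussianReal 0 1 (s i)) (Finset.mem_univ k)]
  simp only [Function.update_self, measure_univ, one_mul]
  congr 1
  apply Finset.prod_congr rfl
  intro j hj
  rw [Function.update_of_ne (Finset.ne_of_mem_erase hj)]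

lemma stein_pi (k : ι) (f f' : (ι → ℝ) → ℝ) (M : ℝ) (hc : Continuous f) (hc' : Continuous f')
    (hf : ∀ g x, HasDerivAt (fun x => f (Function.update g k x)) (f' (Function.update g k x)) x)
    (hb : ∀ x, |f x| ≤ M) (hb' : ∀ x, |f' x| ≤ M) :
    ∫ g, g k * f g ∂(PG ι) = ∫ g, f' g ∂(PG ι) := by
  have hmp := mp_update k
  have i1 : Integrable (fun g => g k * f g) (PG ι) :=
    Integrable.mul_bdd (c := M) (int_coord k) hc.aestronglyMeasurable (ae_of_all _ hb)
  have i2 : Integrable f' (PG ι) :=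
    Integrable.of_bound hc'.aestronglyMeasurable M (ae_of_all _ hb')
  have j1 := hmp.integrable_comp_of_integrable i1
  have j2 := hmp.integrable_comp_of_integrable i2
  have h1 : ∫ g, g k * f g ∂(PG ι) = ∫ p, ((fun g => g k * f g) ∘ fun p : ℝ × (ι → ℝ) => Function.update p.2 k p.1) p
      ∂((gaussianReal 0 1).prod (PG ι)) := by
    have := integral_map hmp.aemeasurable (by rw [hmp.map_eq]; exact i1.1)
    rw [hmp.map_eq] at this
    exact this
  have h2 : ∫ g, f' g ∂(PG ι) = ∫ p, (f' ∘ fun p : ℝ × (ι → ℝ) => Function.update p.2 k p.1) p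
      ∂((gaussianReal 0 1).prod (PG ι)) := by
    have := integral_map hmp.aemeasurable (by rw [hmp.map_eq]; exact i2.1)
    rw [hmp.map_eq] at this
    exact this
  rw [h1, h2, integral_prod_symm _ j1, integral_prod_symm _ j2]
  congr 1; ext g
  simp only [Function.comp_apply, Function.update_self]
  exact stein_one _ _ M (hf g) (fun x => hb _) (fun x => hb' _)

/-- Gibbs average -/
def av (u f : S → ℝ) : ℝ := (∑ σ, f σ * rexp (u σ)) / ∑ σ, rexp (u σ)

lemma sum_exp_pos {S : Type*} [Fintype S] [Nonempty S] (u : S → ℝ) : 0 < ∑ σ, rexp (u σ) :=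
  Finset.sum_pos (fun _ _ => exp_pos _) Finset.univ_nonempty

lemma av_bound {S : Type*} [Fintype S] [Nonempty S] (u f : S → ℝ) (M : ℝ) (h : ∀ σ, |f σ| ≤ M) : |av u f| ≤ M := by
  unfold av
  rw [abs_div, abs_of_pos (sum_exp_pos u), div_le_iff₀ (sum_exp_pos u), Finset.mul_sum]
  refine (Finset.abs_sum_le_sum_abs _ _).trans (Finset.sum_le_sum fun σ _ => ?_)
  rw [abs_mul, abs_of_pos (exp_pos _)]
  exact mul_le_mul_of_nonneg_right (h σ) (exp_pos _).le

lemma deriv_logZ {S : Type*} [Fintype S] [Nonempty S] (u : ℝ → S → ℝ) (u' : S → ℝ) (s : ℝ)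
    (h : ∀ σ, HasDerivAt (fun s => u s σ) (u' σ) s) :
    HasDerivAt (fun s => Real.log (∑ σ, rexp (u s σ))) (av (u s) u') s := by
  have h1 : HasDerivAt (fun s => ∑ σ, rexp (u s σ)) (∑ σ, rexp (u s σ) * u' σ) s :=
    HasDerivAt.fun_sum fun σ _ => (h σ).exp
  refine (h1.log (sum_exp_pos _).ne').congr_deriv ?_
  unfold av
  congr 1
  exact Finset.sum_congr rfl fun _ _ => mul_comm _ _

lemma deriv_av {S : Type*} [Fintype S] [Nonempty S] (u : ℝ → S → ℝ) (u' f : S → ℝ) (s : ℝ)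
    (h : ∀ σ, HasDerivAt (fun s => u s σ) (u' σ) s) :
    HasDerivAt (fun s => av (u s) f)
      (av (u s) (fun σ => f σ * u' σ) - av (u s) f * av (u s) u') s := by
  have h1 : HasDerivAt (fun s => ∑ σ, rexp (u s σ)) (∑ σ, u' σ * rexp (u s σ)) s :=
    HasDerivAt.fun_sum fun σ _ => (h σ).exp.congr_deriv (mul_comm _ _)
  have h2 : HasDerivAt (fun s => ∑ σ, f σ * rexp (u s σ))
      (∑ σ, f σ * u' σ * rexp (u s σ)) s :=
    HasDerivAt.fun_sum fun σ _ => ((h σ).exp.const_mul (f σ)).congr_deriv (by ring)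
  have hz := (sum_exp_pos (u s)).ne'
  refine (h2.div h1 hz).congr_deriv ?_
  unfold av
  field_simp

lemma cont_av {S X : Type*} [Fintype S] [Nonempty S] [TopologicalSpace X] (u : X → S → ℝ)
    (f : X → S → ℝ) (hu : ∀ σ, Continuous fun x => u x σ) (hf : ∀ σ, Continuous fun x => f x σ) :
    Continuous (fun x => av (u x) (f x)) := by
  unfold av
  refine Continuous.div ?_ ?_ (fun x => (sum_exp_pos (u x)).ne')
  · exact continuous_finsetSum _ fun σ _ => (hf σ).mul (continuous_exp.comp (hu σ))
  · exact continuous_finsetSum _ fun σ _ => (continuous_exp.comp (hu σ))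

lemma log_bound {S : Type*} [Fintype S] [Nonempty S] (u : S → ℝ) :
    |Real.log (∑ σ, rexp (u σ))| ≤ Real.log (Fintype.card S) + ∑ σ, |u σ| := by
  have hc : (1:ℝ) ≤ Fintype.card S := by exact_mod_cast Fintype.card_pos
  have hl : 0 ≤ Real.log (Fintype.card S) := Real.log_nonneg hc
  have hle : ∀ σ, |u σ| ≤ ∑ σ, |u σ| := fun σ =>
    Finset.single_le_sum (f := fun σ => |u σ|) (fun _ _ => abs_nonneg _) (Finset.mem_univ σ)
  rw [abs_le]
  constructor
  · obtain ⟨σ⟩ := ‹Nonempty S›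
    have : rexp (u σ) ≤ ∑ σ, rexp (u σ) :=
      Finset.single_le_sum (f := fun σ => rexp (u σ)) (fun _ _ => (exp_pos _).le) (Finset.mem_univ σ)
    have h2 := Real.log_le_log (exp_pos _) this
    rw [Real.log_exp] at h2
    have := neg_abs_le (u σ)
    linarith [hle σ]
  · have : ∑ σ, rexp (u σ) ≤ Fintype.card S * rexp (∑ σ, |u σ|) := by
      rw [← nsmul_eq_mul]
      exact Finset.sum_le_card_nsmul _ _ _ fun σ _ =>
        exp_le_exp.2 ((le_abs_self _).trans (hle σ))
    have h2 := Real.log_le_log (sum_exp_pos u) this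
    rwa [Real.log_mul (by positivity) (exp_pos _).ne', Real.log_exp] at h2

/-- exponent -/
def ex (a : ι → S → ℝ) (h : S → ℝ) (c g : ι → ℝ) (σ : S) : ℝ := ∑ k, c k * a k σ * g k + h σ

lemma cont_ex {ι S : Type*} [Fintype ι] (a : ι → S → ℝ) (h : S → ℝ) (c : ι → ℝ) (σ : S) :
    Continuous (fun g => ex a h c g σ) := by
  unfold ex; fun_prop

lemma int_ex {ι S : Type*} [Fintype ι] (a : ι → S → ℝ) (h : S → ℝ) (c : ι → ℝ) (σ : S) :
    Integrable (fun g => ex a h c g σ) (PG ι) := by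
  unfold ex
  exact (integrable_finsetSum _ fun k _ => (int_coord k).const_mul _).add (integrable_const _)

lemma cont_logZ {ι S : Type*} [Fintype ι] [Fintype S] [Nonempty S]
    (a : ι → S → ℝ) (h : S → ℝ) (c : ι → ℝ) :
    Continuous (fun g => Real.log (∑ σ, rexp (ex a h c g σ))) := by
  refine Continuous.log ?_ fun g => (sum_exp_pos _).ne'
  exact continuous_finsetSum _ fun σ _ => continuous_exp.comp (cont_ex a h c σ)

lemma int_logZ {ι S : Type*} [Fintype ι] [Fintype S] [Nonempty S]
    (a : ι → S → ℝ) (h : S → ℝ) (c : ι → ℝ) :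
    Integrable (fun g => Real.log (∑ σ, rexp (ex a h c g σ))) (PG ι) := by
  refine Integrable.mono' (g := fun g => Real.log (Fintype.card S) + ∑ σ, |ex a h c g σ|) ?_
    (cont_logZ a h c).aestronglyMeasurable (ae_of_all _ fun g => log_bound _)
  exact (integrable_const _).add (integrable_finsetSum _ fun σ _ => (int_ex a h c σ).abs)

lemma ibp_av (a : ι → S → ℝ) (h : S → ℝ) (c : ι → ℝ) (k : ι) :
    ∫ g, g k * av (ex a h c g) (a k) ∂(PG ι) =
      ∫ g, c k * (av (ex a h c g) (fun σ => a k σ * a k σ) - av (ex a h c g) (a k) ^ 2)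
        ∂(PG ι) := by
  obtain ⟨M, hM⟩ : ∃ M, ∀ σ, |a k σ| ≤ M :=
    ⟨∑ σ, |a k σ|, fun σ => Finset.single_le_sum (f := fun σ => |a k σ|)
      (fun _ _ => abs_nonneg _) (Finset.mem_univ σ)⟩
  have hM0 : 0 ≤ M := (abs_nonneg _).trans (hM (Classical.arbitrary S))
  have hca := cont_av (fun g => ex a h c g) (fun _ => a k) (cont_ex a h c)
    (fun _ => continuous_const)
  have hca2 := cont_av (fun g => ex a h c g) (fun _ σ => a k σ * a k σ) (cont_ex a h c)
    (fun _ => continuous_const)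
  refine stein_pi k _ _ (M + |c k| * (M * M + M ^ 2)) hca
    (continuous_const.mul (hca2.sub (hca.pow 2))) ?_ ?_ ?_
  · intro g x
    have hd : ∀ σ, HasDerivAt (fun x => ex a h c (Function.update g k x) σ) (c k * a k σ) x := by
      intro σ
      have : (fun x => ex a h c (Function.update g k x) σ) = fun x =>
          c k * a k σ * x + (∑ j ∈ Finset.univ.erase k, c j * a j σ * g j + h σ) := by
        ext x
        unfold ex
        rw [← Finset.add_sum_erase _ _ (Finset.mem_univ k), Function.update_self, add_assoc]
        congr 2
        exact Finset.sum_congr rfl fun j hj => by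
          rw [Function.update_of_ne (Finset.ne_of_mem_erase hj)]
      rw [this]
      simpa using ((hasDerivAt_id x).const_mul (c k * a k σ)).add_const
        (∑ j ∈ Finset.univ.erase k, c j * a j σ * g j + h σ)
    refine (deriv_av (fun x => ex a h c (Function.update g k x)) _ (a k) x hd).congr_deriv ?_
    unfold av
    have e1 : ∀ v : S → ℝ, ∑ σ, a k σ * (c k * a k σ) * rexp (v σ)
        = c k * ∑ σ, a k σ * a k σ * rexp (v σ) := by
      intro v; rw [Finset.mul_sum]; exact Finset.sum_congr rfl fun _ _ => by ring
    have e2 : ∀ v : S → ℝ, ∑ σ, (c k * a k σ) * rexp (v σ)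
        = c k * ∑ σ, a k σ * rexp (v σ) := by
      intro v; rw [Finset.mul_sum]; exact Finset.sum_congr rfl fun _ _ => by ring
    rw [e1, e2]
    ring
  · intro g
    refine (av_bound _ _ M hM).trans ?_
    have : 0 ≤ |c k| * (M * M + M ^ 2) := by positivity
    linarith
  · intro g
    rw [abs_mul]
    have h1 := av_bound (ex a h c g) (fun σ => a k σ * a k σ) (M * M) (fun σ => by
      rw [abs_mul]; exact mul_le_mul (hM σ) (hM σ) (abs_nonneg _) hM0)
    have h2 : |av (ex a h c g) (a k) ^ 2| ≤ M ^ 2 := by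
      rw [abs_pow]; exact pow_le_pow_left₀ (abs_nonneg _) (av_bound _ _ M hM) 2
    have h3 := (abs_sub (av (ex a h c g) (fun σ => a k σ * a k σ)) (av (ex a h c g) (a k) ^ 2)).trans (add_le_add h1 h2)
    have := mul_le_mul_of_nonneg_left h3 (abs_nonneg (c k))
    linarith

lemma main_abs (a : ι → S → ℝ) (h : S → ℝ) (c c' : ℝ → ι → ℝ) (t : ℝ) (U : Set ℝ)
    (hU : U ∈ nhds t) (M : ℝ) (hc : ∀ s ∈ U, ∀ k, HasDerivAt (fun s => c s k) (c' s k) s)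
    (hM : ∀ s ∈ U, ∀ k, |c' s k| ≤ M) :
    HasDerivAt (fun s => ∫ g, Real.log (∑ σ, rexp (ex a h (c s) g σ)) ∂(PG ι))
      (∫ g, ∑ k, c t k * c' t k * (av (ex a h (c t) g) (fun σ => a k σ * a k σ)
        - av (ex a h (c t) g) (a k) ^ 2) ∂(PG ι)) t := by
  obtain ⟨A, hA⟩ : ∃ A, ∀ k σ, |a k σ| ≤ A :=
    ⟨∑ k, ∑ σ, |a k σ|, fun k σ => (Finset.single_le_sum (f := fun σ => |a k σ|)
      (fun _ _ => abs_nonneg _) (Finset.mem_univ σ)).trans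
      (Finset.single_le_sum (f := fun k => ∑ σ, |a k σ|)
      (fun _ _ => Finset.sum_nonneg fun _ _ => abs_nonneg _) (Finset.mem_univ k))⟩
  have hder : ∀ s ∈ U, ∀ g σ, HasDerivAt (fun s => ex a h (c s) g σ)
      (∑ k, c' s k * a k σ * g k) s := by
    intro s hs g σ
    unfold ex
    exact (HasDerivAt.fun_sum fun k _ => ((hc s hs k).mul_const _).mul_const _).add_const _
  have htU := mem_of_mem_nhds hU
  have hmain := (hasDerivAt_integral_of_dominated_loc_of_deriv_le (μ := PG ι) (x₀ := t) (s := U)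
    (F := fun s g => Real.log (∑ σ, rexp (ex a h (c s) g σ)))
    (F' := fun s g => av (ex a h (c s) g) (fun σ => ∑ k, c' s k * a k σ * g k))
    (bound := fun g => ∑ k, M * A * |g k|) hU
    (Filter.Eventually.of_forall fun s => (cont_logZ a h (c s)).aestronglyMeasurable)
    (int_logZ a h (c t))
    (cont_av _ _ (cont_ex a h (c t)) (fun σ => by fun_prop)).aestronglyMeasurable
    (ae_of_all _ fun g s hs => ?_)
    (integrable_finsetSum _ fun k _ => (int_coord k).abs.const_mul _)
    (ae_of_all _ fun g s hs => deriv_logZ _ _ s (hder s hs g))).2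
  · refine hmain.congr_deriv ?_
    have hlin : ∀ g : ι → ℝ, av (ex a h (c t) g) (fun σ => ∑ k, c' t k * a k σ * g k)
        = ∑ k, c' t k * (g k * av (ex a h (c t) g) (a k)) := by
      intro g
      unfold av
      simp only [← mul_div_assoc, ← Finset.sum_div, Finset.sum_mul, Finset.mul_sum]
      rw [Finset.sum_comm]
      congr 1
      exact Finset.sum_congr rfl fun k _ => Finset.sum_congr rfl fun σ _ => by ring
    simp_rw [hlin]
    have hca : ∀ k, Continuous fun g => av (ex a h (c t) g) (a k) := fun k =>
      cont_av (fun g => ex a h (c t) g) (fun _ => a k) (cont_ex a h (c t))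
        (fun _ => continuous_const)
    have hca2 : ∀ k, Continuous fun g => av (ex a h (c t) g) (fun σ => a k σ * a k σ) := fun k =>
      cont_av (fun g => ex a h (c t) g) (fun _ σ => a k σ * a k σ) (cont_ex a h (c t))
        (fun _ => continuous_const)
    have hA0 : ∀ k : ι, 0 ≤ A := fun k =>
      (abs_nonneg _).trans (hA k (Classical.arbitrary S))
    rw [integral_finsetSum, integral_finsetSum]
    · refine Finset.sum_congr rfl fun k _ => ?_
      rw [integral_const_mul, ibp_av, ← integral_const_mul]
      congr 1; ext g; ring
    · intro k _
      refine (Integrable.sub ?_ ?_).const_mul _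
      · refine Integrable.of_bound (hca2 k).aestronglyMeasurable (A * A) (ae_of_all _ fun g => ?_)
        exact av_bound _ _ _ (fun σ => by
          rw [abs_mul]; exact mul_le_mul (hA k σ) (hA k σ) (abs_nonneg _) (hA0 k))
      · refine Integrable.of_bound ((hca k).pow 2).aestronglyMeasurable (A ^ 2)
          (ae_of_all _ fun g => ?_)
        rw [norm_pow]; exact pow_le_pow_left₀ (norm_nonneg _) (av_bound _ _ A (hA k)) 2
    · intro k _
      refine Integrable.const_mul ?_ _
      exact Integrable.mul_bdd (c := A) (int_coord k) (hca k).aestronglyMeasurable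
        (ae_of_all _ fun g => av_bound _ _ A (hA k))
  · refine av_bound _ _ _ fun σ => ?_
    refine (Finset.abs_sum_le_sum_abs _ _).trans (Finset.sum_le_sum fun k _ => ?_)
    rw [abs_mul, abs_mul]
    have := hM s hs k
    exact mul_le_mul_of_nonneg_right (mul_le_mul this (hA k σ) (abs_nonneg _)
      ((abs_nonneg _).trans this)) (abs_nonneg _)
end abs

section conc

/-- index set of all Gaussians -/
abbrev II (ν N : ℕ) := (Fin ν × Fin N × Fin N) ⊕ (Fin ν × Fin N)

/-- unflattening -/
def emap (ν N : ℕ) (g : II ν N → ℝ) : Weights ν N × Fields ν N :=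
  (fun x i j => g (Sum.inl (x, i, j)), fun x i => g (Sum.inr (x, i)))

instance (ν N : ℕ) : IsProbabilityMeasure (μW ν N) := by unfold μW; infer_instance
instance (ν N : ℕ) : IsProbabilityMeasure (μF ν N) := by unfold μF; infer_instance

lemma mp_curry {A B : Type*} [Fintype A] [Fintype B] {X : Type*} [MeasurableSpace X]
    (m : Measure X) [IsProbabilityMeasure m] :
    MeasurePreserving (MeasurableEquiv.curry A B X) (Measure.pi fun _ => m)
      (Measure.pi fun _ => Measure.pi fun _ => m) := by
  refine ⟨(MeasurableEquiv.curry A B X).measurable, ?_⟩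
  have := Measure.infinitePi_map_curry (ι := A) (κ := B) (fun _ _ => m)
  simpa only [Measure.infinitePi_eq_pi] using this

lemma mp_map {A : Type*} [Fintype A] {X Y : Type*} [MeasurableSpace X] [MeasurableSpace Y]
    (m : Measure X) (m' : Measure Y) [IsProbabilityMeasure m] [IsProbabilityMeasure m'] (f : X → Y)
    (h : MeasurePreserving f m m') :
    MeasurePreserving (fun (g : A → X) a => f (g a)) (Measure.pi fun _ => m)
      (Measure.pi fun _ => m') :=
  measurePreserving_pi (fun _ => m) (fun _ => m') (fun _ => h)

lemma mp_emap (ν N : ℕ) :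
    MeasurePreserving (emap ν N) (PG (II ν N)) ((μW ν N).prod (μF ν N)) := by
  have h1 := measurePreserving_sumPiEquivProdPi (ι := Fin ν × Fin N × Fin N) (ι' := Fin ν × Fin N)
    (X := fun _ => ℝ) (fun _ => gaussianReal 0 1)
  have h2 : MeasurePreserving (fun (g : Fin ν × Fin N × Fin N → ℝ) x i j => g (x, i, j))
      (Measure.pi fun _ => gaussianReal 0 1) (μW ν N) :=
    (mp_map (A := Fin ν) _ _ _ (mp_curry (A := Fin N) (B := Fin N) (gaussianReal 0 1))).comp
      (mp_curry (A := Fin ν) (B := Fin N × Fin N) (gaussianReal 0 1))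
  have h3 : MeasurePreserving (fun (g : Fin ν × Fin N → ℝ) x i => g (x, i))
      (Measure.pi fun _ => gaussianReal 0 1) (μF ν N) :=
    (mp_curry (A := Fin ν) (B := Fin N) (gaussianReal 0 1))
  exact (h2.prod h3).comp h1

lemma int_emap (ν N : ℕ) (F : Weights ν N → Fields ν N → ℝ)
    (hF : Continuous (fun p : Weights ν N × Fields ν N => F p.1 p.2))
    (hi : Integrable (fun g => F (emap ν N g).1 (emap ν N g).2) (PG (II ν N))) :
    ∫ ξ, ∫ η, F ξ η ∂(μF ν N) ∂(μW ν N) =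
      ∫ g, F (emap ν N g).1 (emap ν N g).2 ∂(PG (II ν N)) := by
  have hmp := mp_emap ν N
  have hm : AEStronglyMeasurable (fun p : Weights ν N × Fields ν N => F p.1 p.2)
    ((μW ν N).prod (μF ν N)) := hF.aestronglyMeasurable
  have hi2 : Integrable (fun p : Weights ν N × Fields ν N => F p.1 p.2)
      ((μW ν N).prod (μF ν N)) := (hmp.integrable_comp hm).1 hi
  have h1 := integral_map hmp.aemeasurable (f := fun p : Weights ν N × Fields ν N => F p.1 p.2)
    (by rw [hmp.map_eq]; exact hm)
  rw [hmp.map_eq, integral_prod _ hi2] at h1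
  exact h1

variable (ν N : ℕ) (Nv : Fin ν → ℕ) (α q : Fin ν → ℝ) (β : ℝ) (b : Fin ν → ℝ)

/-- coefficients -/
def aC : II ν N → Config ν N → ℝ
  | Sum.inl (x, i, j), σ => ∑ y : Fin ν, if (y : ℕ) = (x : ℕ) + 1 then
      (if (i : ℕ) < Nv x ∧ (j : ℕ) < Nv y then β / √N * sg (σ x i) * sg (σ y j) else 0) else 0
  | Sum.inr (x, i), σ => if (i : ℕ) < Nv x then -β * √(Qv ν α q x) * sg (σ x i) else 0

/-- times -/
def cC (s : ℝ) : II ν N → ℝ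
  | Sum.inl _ => √s
  | Sum.inr _ => √(1 - s)

/-- times, derivative -/
def cC' (s : ℝ) : II ν N → ℝ
  | Sum.inl _ => 1 / (2 * √s)
  | Sum.inr _ => -(1 / (2 * √(1 - s)))

lemma expo (s : ℝ) (g : II ν N → ℝ) (σ : Config ν N) :
    -β * hamT ν N Nv α q s (emap ν N g).1 (emap ν N g).2 σ + bias ν N Nv b σ
      = ex (aC ν N Nv α q β) (bias ν N Nv b) (cC ν N s) g σ := by
  unfold ex hamT
  congr 1
  rw [Fintype.sum_sum_type, mul_add]
  congr 1
  · unfold ham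
    rw [mul_neg, neg_mul_neg]
    simp only [Fintype.sum_prod_type, aC, cC, emap, Finset.mul_sum, Finset.sum_mul]
    refine Finset.sum_congr rfl fun x _ => ?_
    have : ∀ y : Fin ν, β * (√s * (if (y : ℕ) = (x : ℕ) + 1 then
        ∑ i : Fin N, ∑ j : Fin N,
          (if (i : ℕ) < Nv x ∧ (j : ℕ) < Nv y then
            g (Sum.inl (x, i, j)) / √N * sg (σ x i) * sg (σ y j)
          else 0)
      else 0)) = ∑ i : Fin N, ∑ j : Fin N, √s * (if (y : ℕ) = (x : ℕ) + 1 then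
      (if (i : ℕ) < Nv x ∧ (j : ℕ) < Nv y then β / √N * sg (σ x i) * sg (σ y j) else 0) else 0)
        * g (Sum.inl (x, i, j)) := by
      intro y
      split_ifs
      · simp only [Finset.mul_sum]
        refine Finset.sum_congr rfl fun i _ => Finset.sum_congr rfl fun j _ => ?_
        split_ifs <;> ring
      · simp
    rw [Finset.sum_congr rfl fun y _ => this y, Finset.sum_comm]
    refine Finset.sum_congr rfl fun i _ => ?_
    rw [Finset.sum_comm]
  · unfold ham'
    simp only [Fintype.sum_prod_type, aC, cC, emap, Finset.mul_sum]
    refine Finset.sum_congr rfl fun x _ => Finset.sum_congr rfl fun i _ => ?_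
    split_ifs <;> ring

lemma sum_succ_mul (x : Fin ν) (f f' : Fin ν → ℝ) :
    (∑ y : Fin ν, if (y : ℕ) = (x : ℕ) + 1 then f y else 0) *
    (∑ y : Fin ν, if (y : ℕ) = (x : ℕ) + 1 then f' y else 0) =
    ∑ y : Fin ν, if (y : ℕ) = (x : ℕ) + 1 then f y * f' y else 0 := by
  by_cases h : (x : ℕ) + 1 < ν
  · have : ∀ y : Fin ν, ((y : ℕ) = (x : ℕ) + 1) ↔ y = ⟨(x : ℕ) + 1, h⟩ := fun y => by
      rw [Fin.ext_iff]
    simp only [this, Finset.sum_ite_eq', Finset.mem_univ, if_true]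
  · have : ∀ y : Fin ν, ¬ ((y : ℕ) = (x : ℕ) + 1) := fun y hy => h (hy ▸ y.2)
    simp [this]

lemma kern (hN : 0 < N) (hNv : ∀ x, 0 < Nv x)
    (hq : ∀ x, q x ∈ Icc (0:ℝ) 1) (hα : ∀ x, α x = (Nv x : ℝ) / N)
    (t : ℝ) (ht : t ∈ Ioo (0:ℝ) 1) (σ τ : Config ν N) :
    ∑ k, cC ν N t k * cC' ν N t k * (aC ν N Nv α q β k σ * aC ν N Nv α q β k τ) =
      β ^ 2 / 2 * N * adjSum ν (fun x y => α x * α y * (ovl ν N Nv x σ τ * ovl ν N Nv y σ τ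
        - q y * ovl ν N Nv x σ τ - q x * ovl ν N Nv y σ τ)) := by
  have hN' : (N : ℝ) ≠ 0 := by positivity
  have ht0 : √t ≠ 0 := (Real.sqrt_pos.2 ht.1).ne'
  have ht1 : √(1 - t) ≠ 0 := (Real.sqrt_pos.2 (by linarith [ht.2])).ne'
  have hR : ∀ x, ∑ i : Fin N, (if (i : ℕ) < Nv x then sg (σ x i) * sg (τ x i) else 0)
      = N * α x * ovl ν N Nv x σ τ := by
    intro x
    have : (Nv x : ℝ) ≠ 0 := by have := hNv x; positivity
    rw [hα]; unfold ovl; field_simp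
  have hα0 : ∀ x, 0 ≤ α x := fun x => by rw [hα]; positivity
  have hQ : ∀ x, 0 ≤ Qv ν α q x := fun x => Finset.sum_nonneg fun y _ => by
    split_ifs
    · exact mul_nonneg (hα0 y) (hq y).1
    · exact le_rfl
  have hL : ∑ p : Fin ν × Fin N × Fin N, cC ν N t (Sum.inl p) * cC' ν N t (Sum.inl p) *
        (aC ν N Nv α q β (Sum.inl p) σ * aC ν N Nv α q β (Sum.inl p) τ)
      = β ^ 2 / 2 * N * adjSum ν (fun x y => α x * α y *
        (ovl ν N Nv x σ τ * ovl ν N Nv y σ τ)) := by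
    simp only [Fintype.sum_prod_type, aC, cC, cC', sum_succ_mul]
    unfold adjSum
    simp only [Finset.mul_sum]
    refine Finset.sum_congr rfl fun x _ => ?_
    rw [Finset.sum_congr rfl fun i _ => Finset.sum_comm, Finset.sum_comm]
    refine Finset.sum_congr rfl fun y _ => ?_
    split_ifs with hxy
    · have h2 : β ^ 2 / 2 * N * (α x * α y * (ovl ν N Nv x σ τ * ovl ν N Nv y σ τ)) =
          β ^ 2 / 2 / N * ((N * α x * ovl ν N Nv x σ τ) * (N * α y * ovl ν N Nv y σ τ)) := by
        field_simp
      rw [h2, ← hR, ← hR, Finset.sum_mul_sum, Finset.mul_sum]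
      refine Finset.sum_congr rfl fun i _ => ?_
      rw [Finset.mul_sum]
      refine Finset.sum_congr rfl fun j _ => ?_
      have hs : (√(N:ℝ)) ^ 2 = N := Real.sq_sqrt (by positivity)
      have hs0 : √(N:ℝ) ≠ 0 := (Real.sqrt_pos.2 (by positivity)).ne'
      by_cases h1 : (i : ℕ) < Nv x <;> by_cases h2 : (j : ℕ) < Nv y <;> simp only [h1, h2, and_self, and_false, false_and, if_true, if_false, mul_zero, zero_mul]
      field_simp
      rw [hs]
      ring
    · simp
  have hRt : ∑ p : Fin ν × Fin N, cC ν N t (Sum.inr p) * cC' ν N t (Sum.inr p) *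
        (aC ν N Nv α q β (Sum.inr p) σ * aC ν N Nv α q β (Sum.inr p) τ)
      = - (β ^ 2 / 2 * N * ∑ x, Qv ν α q x * (α x * ovl ν N Nv x σ τ)) := by
    simp only [Fintype.sum_prod_type, aC, cC, cC']
    rw [Finset.mul_sum, ← Finset.sum_neg_distrib]
    refine Finset.sum_congr rfl fun x _ => ?_
    have h2 : -(β ^ 2 / 2 * N * (Qv ν α q x * (α x * ovl ν N Nv x σ τ))) =
        -(β ^ 2 / 2 * Qv ν α q x) * (N * α x * ovl ν N Nv x σ τ) := by ring
    rw [h2, ← hR, Finset.mul_sum]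
    refine Finset.sum_congr rfl fun i _ => ?_
    split_ifs
    · have hs : (√(Qv ν α q x)) ^ 2 = Qv ν α q x := Real.sq_sqrt (hQ x)
      rw [← hs]
      simp only [Real.sqrt_sq (Real.sqrt_nonneg _)]
      field_simp
    · simp
  have hQs : ∑ x, Qv ν α q x * (α x * ovl ν N Nv x σ τ) = adjSum ν (fun x y => α x * α y *
      (q y * ovl ν N Nv x σ τ)) + adjSum ν (fun x y => α x * α y *
      (q x * ovl ν N Nv y σ τ)) := by
    unfold adjSum Qv
    rw [Finset.sum_comm (f := fun x y : Fin ν => if (y : ℕ) = (x : ℕ) + 1 then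
      α x * α y * (q x * ovl ν N Nv y σ τ) else 0), ← Finset.sum_add_distrib]
    refine Finset.sum_congr rfl fun x _ => ?_
    rw [Finset.sum_mul, ← Finset.sum_add_distrib]
    refine Finset.sum_congr rfl fun y _ => ?_
    by_cases h1 : (y : ℕ) = (x : ℕ) + 1
    · have h2 : ¬ ((x : ℕ) = (y : ℕ) + 1) := by omega
      simp only [h1, true_or, if_true]
      rw [if_neg (by omega)]; ring
    · by_cases h2 : (x : ℕ) = (y : ℕ) + 1
      · rw [if_pos (Or.inr h2.symm), if_neg h1, if_pos h2]; ring
      · rw [if_neg (by omega), if_neg h1, if_neg h2]; ring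
  rw [Fintype.sum_sum_type, hL, hRt, hQs]
  have : adjSum ν (fun x y => α x * α y * (ovl ν N Nv x σ τ * ovl ν N Nv y σ τ
        - q y * ovl ν N Nv x σ τ - q x * ovl ν N Nv y σ τ)) =
      adjSum ν (fun x y => α x * α y * (ovl ν N Nv x σ τ * ovl ν N Nv y σ τ)) -
      adjSum ν (fun x y => α x * α y * (q y * ovl ν N Nv x σ τ)) -
      adjSum ν (fun x y => α x * α y * (q x * ovl ν N Nv y σ τ)) := by
    unfold adjSum
    simp only [← Finset.sum_sub_distrib]
    refine Finset.sum_congr rfl fun x _ => Finset.sum_congr rfl fun y _ => ?_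
    split_ifs <;> ring
  rw [this]; ring

lemma ovl_self (hNv : ∀ x, 0 < Nv x) (hle : ∀ x, Nv x ≤ N) (x : Fin ν) (σ : Config ν N) :
    ovl ν N Nv x σ σ = 1 := by
  have hsg : ∀ s, sg s * sg s = 1 := fun s => by unfold sg; split_ifs <;> norm_num
  have h0 : (Nv x : ℝ) ≠ 0 := by have := hNv x; positivity
  unfold ovl
  simp only [hsg]
  rw [div_eq_one_iff_eq h0, ← Finset.sum_filter, Finset.sum_const, nsmul_eq_mul, mul_one]
  congr 1
  rw [Fin.card_filter_val_lt]
  exact min_eq_right (hle x)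

end conc

section fin

lemma gibbs_emap (ν N : ℕ) (Nv : Fin ν → ℕ) (α q : Fin ν → ℝ) (β t : ℝ) (b : Fin ν → ℝ)
    (g : II ν N → ℝ) (f : Config ν N → Config ν N → ℝ) :
    gibbs2 ν N Nv α q β t b (emap ν N g).1 (emap ν N g).2 f =
      (∑ σ, ∑ τ, f σ τ * rexp (ex (aC ν N Nv α q β) (bias ν N Nv b) (cC ν N t) g σ)
        * rexp (ex (aC ν N Nv α q β) (bias ν N Nv b) (cC ν N t) g τ)) /
      (∑ σ, rexp (ex (aC ν N Nv α q β) (bias ν N Nv b) (cC ν N t) g σ)) ^ 2 := by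
  unfold gibbs2 bw
  simp only [expo]

lemma cont_bw (ν N : ℕ) (Nv : Fin ν → ℕ) (α q : Fin ν → ℝ) (β t : ℝ) (b : Fin ν → ℝ)
    (σ : Config ν N) :
    Continuous (fun p : Weights ν N × Fields ν N => bw ν N Nv α q β t b p.1 p.2 σ) := by
  have h1 : Continuous (fun p : Weights ν N × Fields ν N => ham ν N Nv p.1 σ) := by
    unfold ham
    refine (continuous_finsetSum _ fun x _ => continuous_finsetSum _ fun y _ => ?_).neg
    split_ifs
    · refine continuous_finsetSum _ fun i _ => continuous_finsetSum _ fun j _ => ?_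
      split_ifs
      · simp only [div_eq_mul_inv]; fun_prop
      · exact continuous_const
    · exact continuous_const
  have h2 : Continuous (fun p : Weights ν N × Fields ν N => ham' ν N Nv α q p.2 σ) := by
    unfold ham'
    refine continuous_finsetSum _ fun x _ => continuous_const.mul
      (continuous_finsetSum _ fun y _ => ?_)
    split_ifs
    · fun_prop
    · exact continuous_const
  unfold bw hamT
  fun_prop

lemma bw_sum_pos (ν N : ℕ) (Nv : Fin ν → ℕ) (α q : Fin ν → ℝ) (β t : ℝ) (b : Fin ν → ℝ)
    (ξ : Weights ν N) (η : Fields ν N) :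
    0 < ∑ σ : Config ν N, bw ν N Nv α q β t b ξ η σ :=
  Finset.sum_pos (fun _ _ => exp_pos _) Finset.univ_nonempty

lemma cont_gibbs (ν N : ℕ) (Nv : Fin ν → ℕ) (α q : Fin ν → ℝ) (β t : ℝ) (b : Fin ν → ℝ)
    (f : Config ν N → Config ν N → ℝ) :
    Continuous (fun p : Weights ν N × Fields ν N => gibbs2 ν N Nv α q β t b p.1 p.2 f) := by
  unfold gibbs2
  refine Continuous.div ?_ ?_ fun p => (pow_pos (bw_sum_pos ν N Nv α q β t b p.1 p.2) 2).ne'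
  · exact continuous_finsetSum _ fun σ _ => continuous_finsetSum _ fun τ _ =>
      (continuous_const.mul (cont_bw ν N Nv α q β t b σ)).mul (cont_bw ν N Nv α q β t b τ)
  · exact (continuous_finsetSum _ fun σ _ => cont_bw ν N Nv α q β t b σ).pow 2

lemma gibbs_bound (ν N : ℕ) (Nv : Fin ν → ℕ) (α q : Fin ν → ℝ) (β t : ℝ) (b : Fin ν → ℝ)
    (f : Config ν N → Config ν N → ℝ) (M : ℝ) (hf : ∀ σ τ, |f σ τ| ≤ M)
    (ξ : Weights ν N) (η : Fields ν N) :
    |gibbs2 ν N Nv α q β t b ξ η f| ≤ M := by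
  have hp := pow_pos (bw_sum_pos ν N Nv α q β t b ξ η) 2
  have hb : ∀ σ, 0 < bw ν N Nv α q β t b ξ η σ := fun σ => exp_pos _
  unfold gibbs2
  rw [abs_div, abs_of_pos hp, div_le_iff₀ hp, sq, Finset.sum_mul_sum, Finset.mul_sum]
  refine (Finset.abs_sum_le_sum_abs _ _).trans (Finset.sum_le_sum fun σ _ => ?_)
  rw [Finset.mul_sum]
  refine (Finset.abs_sum_le_sum_abs _ _).trans (Finset.sum_le_sum fun τ _ => ?_)
  rw [abs_mul, abs_mul, abs_of_pos (hb σ), abs_of_pos (hb τ), mul_assoc]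
  exact mul_le_mul_of_nonneg_right (hf σ τ) (mul_pos (hb σ) (hb τ)).le

lemma cont_emap (ν N : ℕ) : Continuous (emap ν N) := by
  unfold emap; fun_prop

lemma int_gibbs (ν N : ℕ) (Nv : Fin ν → ℕ) (α q : Fin ν → ℝ) (β t : ℝ) (b : Fin ν → ℝ)
    (f : Config ν N → Config ν N → ℝ) :
    Integrable (fun g => gibbs2 ν N Nv α q β t b (emap ν N g).1 (emap ν N g).2 f)
      (PG (II ν N)) := by
  refine Integrable.of_bound
    ((cont_gibbs ν N Nv α q β t b f).comp (cont_emap ν N)).aestronglyMeasurable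
    (∑ σ, ∑ τ, |f σ τ|) (ae_of_all _ fun g => gibbs_bound _ _ _ _ _ _ _ _ _ _ (fun σ τ => ?_) _ _)
  exact (Finset.single_le_sum (f := fun τ => |f σ τ|)
      (fun _ _ => abs_nonneg _) (Finset.mem_univ τ)).trans
      (Finset.single_le_sum (f := fun σ => ∑ τ, |f σ τ|)
      (fun _ _ => Finset.sum_nonneg fun _ _ => abs_nonneg _) (Finset.mem_univ σ))

lemma var_two {ι S : Type*} [Fintype ι] [Fintype S] [Nonempty S] (d : ι → ℝ) (a : ι → S → ℝ)
    (u : S → ℝ) :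
    ∑ k, d k * (av u (fun σ => a k σ * a k σ) - av u (a k) ^ 2) =
      (∑ σ, ∑ τ, (∑ k, d k * (a k σ * a k σ) - ∑ k, d k * (a k σ * a k τ)) * rexp (u σ)
        * rexp (u τ)) / (∑ σ, rexp (u σ)) ^ 2 := by
  have hz := (sum_exp_pos u).ne'
  rw [eq_div_iff (pow_ne_zero 2 hz), Finset.sum_mul]
  have h1 : ∀ k, d k * (av u (fun σ => a k σ * a k σ) - av u (a k) ^ 2) * (∑ σ, rexp (u σ)) ^ 2
      = ∑ σ, ∑ τ, d k * (a k σ * a k σ - a k σ * a k τ) * rexp (u σ) * rexp (u τ) := by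
    intro k
    have : d k * (av u (fun σ => a k σ * a k σ) - av u (a k) ^ 2) * (∑ σ, rexp (u σ)) ^ 2 =
      d k * ((∑ σ, a k σ * a k σ * rexp (u σ)) * (∑ σ, rexp (u σ)) -
        (∑ σ, a k σ * rexp (u σ)) * (∑ σ, a k σ * rexp (u σ))) := by
      unfold av; field_simp
    rw [this, Finset.sum_mul_sum, Finset.sum_mul_sum, ← Finset.sum_sub_distrib, Finset.mul_sum]
    refine Finset.sum_congr rfl fun σ _ => ?_
    rw [← Finset.sum_sub_distrib, Finset.mul_sum]
    refine Finset.sum_congr rfl fun τ _ => ?_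
    ring
  rw [Finset.sum_congr rfl fun k _ => h1 k, Finset.sum_comm]
  refine Finset.sum_congr rfl fun σ _ => ?_
  rw [Finset.sum_comm]
  refine Finset.sum_congr rfl fun τ _ => ?_
  rw [← Finset.sum_sub_distrib, Finset.sum_mul, Finset.sum_mul]
  exact Finset.sum_congr rfl fun k _ => by ring

lemma gibbs_lin (ν N : ℕ) (Nv : Fin ν → ℕ) (α q : Fin ν → ℝ) (β t : ℝ) (b : Fin ν → ℝ)
    (ξ : Weights ν N) (η : Fields ν N) (A B : ℝ) (e : Fin ν → Fin ν → ℝ)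
    (f : Fin ν → Fin ν → Config ν N → Config ν N → ℝ) :
    gibbs2 ν N Nv α q β t b ξ η
      (fun σ τ => A - B * adjSum ν (fun x y => e x y * f x y σ τ)) =
    A - B * adjSum ν (fun x y => e x y * gibbs2 ν N Nv α q β t b ξ η (f x y)) := by
  have hp := (pow_pos (bw_sum_pos ν N Nv α q β t b ξ η) 2).ne'
  unfold gibbs2 adjSum
  set w := bw ν N Nv α q β t b ξ η
  rw [div_eq_iff hp, sub_mul]
  have h1 : A * (∑ σ, w σ) ^ 2 = ∑ σ, ∑ τ, A * w σ * w τ := by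
    rw [sq, Finset.sum_mul_sum, Finset.mul_sum]
    refine Finset.sum_congr rfl fun σ _ => ?_
    rw [Finset.mul_sum]
    exact Finset.sum_congr rfl fun τ _ => by ring
  have h2 : (B * ∑ x : Fin ν, ∑ y : Fin ν, if (y : ℕ) = (x : ℕ) + 1 then
      e x y * ((∑ σ, ∑ τ, f x y σ τ * w σ * w τ) / (∑ σ, w σ) ^ 2) else 0) * (∑ σ, w σ) ^ 2 =
      ∑ σ, ∑ τ, (B * ∑ x : Fin ν, ∑ y : Fin ν, if (y : ℕ) = (x : ℕ) + 1 then
        e x y * f x y σ τ else 0) * w σ * w τ := by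
    have h3 : ∀ x y : Fin ν, (B * (if (y : ℕ) = (x : ℕ) + 1 then
      e x y * ((∑ σ, ∑ τ, f x y σ τ * w σ * w τ) / (∑ σ, w σ) ^ 2) else 0)) * (∑ σ, w σ) ^ 2 =
      ∑ σ, ∑ τ, (B * (if (y : ℕ) = (x : ℕ) + 1 then e x y * f x y σ τ else 0)) * w σ * w τ := by
      intro x y
      split_ifs
      · have : B * (e x y * ((∑ σ, ∑ τ, f x y σ τ * w σ * w τ) / (∑ σ, w σ) ^ 2)) *
          (∑ σ, w σ) ^ 2 = B * e x y * ∑ σ, ∑ τ, f x y σ τ * w σ * w τ := by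
          rw [← mul_assoc, mul_assoc, div_mul_cancel₀ _ hp]
        rw [this]
        simp only [Finset.mul_sum]
        exact Finset.sum_congr rfl fun σ _ => Finset.sum_congr rfl fun τ _ => by ring
      · simp
    have l : ∀ (p : Fin ν → Fin ν → ℝ) (K : ℝ), (B * ∑ x, ∑ y, p x y) * K =
        ∑ x, ∑ y, B * p x y * K := by
      intro p K; simp only [Finset.mul_sum, Finset.sum_mul]
    have l2 : ∀ (p : Fin ν → Fin ν → ℝ) (K K' : ℝ), (B * ∑ x, ∑ y, p x y) * K * K' =
        ∑ x, ∑ y, B * p x y * K * K' := by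
      intro p K K'; simp only [Finset.mul_sum, Finset.sum_mul]
    rw [l, Finset.sum_congr rfl fun x _ => Finset.sum_congr rfl fun y _ => h3 x y,
      Finset.sum_congr rfl fun σ _ => Finset.sum_congr rfl fun τ _ => l2 _ _ _]
    rw [Finset.sum_congr rfl fun x _ => Finset.sum_comm, Finset.sum_comm]
    refine Finset.sum_congr rfl fun σ _ => ?_
    rw [Finset.sum_congr rfl fun x _ => Finset.sum_comm, Finset.sum_comm]
  rw [h1, h2, ← Finset.sum_sub_distrib]
  refine Finset.sum_congr rfl fun σ _ => ?_
  rw [← Finset.sum_sub_distrib]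
  exact Finset.sum_congr rfl fun τ _ => by ring

lemma cC_deriv (ν N : ℕ) (s : ℝ) (hs : s ∈ Ioo (0:ℝ) 1) (k : II ν N) :
    HasDerivAt (fun s => cC ν N s k) (cC' ν N s k) s := by
  rcases k with k | k
  · exact Real.hasDerivAt_sqrt hs.1.ne'
  · have h : HasDerivAt (fun s : ℝ => 1 - s) (-1) s := by
      simpa using (hasDerivAt_id s).const_sub 1
    refine (h.sqrt (by linarith [hs.2])).congr_deriv ?_
    simp only [cC']; ring

lemma cC_bound (ν N : ℕ) (r s : ℝ) (hr : 0 < r) (h1 : r < s) (h2 : s < 1 - r) (k : II ν N) :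
    |cC' ν N s k| ≤ 1 / (2 * √r) := by
  have hr' := Real.sqrt_pos.2 hr
  rcases k with k | k <;> simp only [cC', abs_neg]
  · rw [abs_of_nonneg (by positivity)]
    exact one_div_le_one_div_of_le (by positivity) (by
      have := Real.sqrt_le_sqrt h1.le; linarith)
  · rw [abs_of_nonneg (by positivity)]
    exact one_div_le_one_div_of_le (by positivity) (by
      have := Real.sqrt_le_sqrt (show r ≤ 1 - s by linarith); linarith)

end fin

/-- along the interpolation `H_{N,t} = √t H_N + √(1−t) H'_N`,
the derivative of `φ_N(t) = (1/N) E[log Z_N(t)]` equals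
`(β²/2) Σ_{|x−y|=1} α_x α_y (1−q_x)(1−q_y)
  − (β²/2) Σ_{|x−y|=1} α_x α_y E⟨(q_x − R^{(x)})(q_y − R^{(y)})⟩_t`. -/
theorem phi_derivative
    (ν N : ℕ) (hν : 2 ≤ ν) (hN : 0 < N)
    (Nv : Fin ν → ℕ) (hNv : ∀ x, 0 < Nv x) (hsum : ∑ x, Nv x = N)
    (β : ℝ) (hβ : 0 ≤ β) (b : Fin ν → ℝ)
    (q : Fin ν → ℝ) (hq : ∀ x, q x ∈ Icc (0:ℝ) 1)
    (α : Fin ν → ℝ) (hα : ∀ x, α x = (Nv x : ℝ) / N) :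
    ∀ t ∈ Ioo (0:ℝ) 1,
      HasDerivAt
        (fun s => (1 / (N:ℝ)) *
          ∫ ξ, ∫ η, Real.log (Z ν N Nv α q β s b ξ η) ∂(μF ν N) ∂(μW ν N))
        (β ^ 2 / 2 * adjSum ν (fun x y => α x * α y * (1 - q x) * (1 - q y)) -
          β ^ 2 / 2 * adjSum ν (fun x y => α x * α y *
            ∫ ξ, ∫ η,
              gibbs2 ν N Nv α q β t b ξ η
                (fun σ τ => (q x - ovl ν N Nv x σ τ) * (q y - ovl ν N Nv y σ τ))
              ∂(μF ν N) ∂(μW ν N))) t := by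
  intro t ht
  have hN' : (N : ℝ) ≠ 0 := by positivity
  have hle : ∀ x, Nv x ≤ N := fun x => by
    rw [← hsum]
    exact Finset.single_le_sum (f := Nv) (fun _ _ => Nat.zero_le _) (Finset.mem_univ x)
  set a := aC ν N Nv α q β with ha
  set h := bias ν N Nv b with hh
  -- the logarithm of the partition function
  have hlog : ∀ s g, Real.log (Z ν N Nv α q β s b (emap ν N g).1 (emap ν N g).2) =
      Real.log (∑ σ, rexp (ex a h (cC ν N s) g σ)) - Real.log (2 ^ (ν * N)) := by
    intro s g
    unfold Z bw
    simp only [expo]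
    rw [Real.log_div (sum_exp_pos _).ne' (by positivity)]
  have hFun : ∀ s, ∫ ξ, ∫ η, Real.log (Z ν N Nv α q β s b ξ η) ∂(μF ν N) ∂(μW ν N) =
      ∫ g, Real.log (∑ σ, rexp (ex a h (cC ν N s) g σ)) ∂(PG (II ν N)) - Real.log (2 ^ (ν * N)) := by
    intro s
    rw [int_emap ν N (fun ξ η => Real.log (Z ν N Nv α q β s b ξ η))]
    · simp only [hlog]
      rw [integral_sub (int_logZ a h _) (integrable_const _), integral_const]
      simp
    · refine Continuous.log ?_ fun p => ?_
      · unfold Z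
        exact (continuous_finsetSum _ fun σ _ => cont_bw ν N Nv α q β s b σ).div_const _
      · exact (div_pos (bw_sum_pos ν N Nv α q β s b p.1 p.2) (by positivity)).ne'
    · simp only [hlog]
      exact (int_logZ a h _).sub (integrable_const _)
  simp only [hFun]
  obtain ⟨r, hr, hr1, hr2⟩ : ∃ r : ℝ, 0 < r ∧ r < t ∧ t < 1 - r := by
    refine ⟨min t (1 - t) / 2, ?_, ?_, ?_⟩
    · have := lt_min ht.1 (sub_pos.2 ht.2); linarith
    · have := min_le_left t (1 - t); linarith [ht.1]
    · have := min_le_right t (1 - t); linarith [ht.2]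
  have hmain := main_abs a h (cC ν N) (cC' ν N) t (Ioo r (1 - r)) (Ioo_mem_nhds hr1 hr2)
    (1 / (2 * √r)) (fun s hs k => cC_deriv ν N s ⟨hr.trans hs.1, by linarith [hs.2]⟩ k)
    (fun s hs k => cC_bound ν N r s hr hs.1 hs.2 k)
  refine ((hmain.sub_const (Real.log (2 ^ (ν * N)))).const_mul (1 / (N : ℝ))).congr_deriv ?_
  set G := fun (x y : Fin ν) (σ τ : Config ν N) =>
    (q x - ovl ν N Nv x σ τ) * (q y - ovl ν N Nv y σ τ) with hG
  set A := adjSum ν (fun x y => α x * α y * (1 - q x) * (1 - q y)) with hA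
  -- pointwise identity
  have hpt : ∀ g, ∑ k, cC ν N t k * cC' ν N t k * (av (ex a h (cC ν N t) g)
      (fun σ => a k σ * a k σ) - av (ex a h (cC ν N t) g) (a k) ^ 2) =
      β ^ 2 / 2 * N * A - β ^ 2 / 2 * N * adjSum ν (fun x y => (α x * α y) *
        gibbs2 ν N Nv α q β t b (emap ν N g).1 (emap ν N g).2 (G x y)) := by
    intro g
    rw [var_two, ← gibbs_lin, gibbs_emap]
    congr 1
    refine Finset.sum_congr rfl fun σ _ => Finset.sum_congr rfl fun τ _ => ?_
    congr 2
    rw [ha, kern ν N Nv α q β hN hNv hq hα t ht, kern ν N Nv α q β hN hNv hq hα t ht, hA,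
      ← mul_sub, ← mul_sub]
    congr 1
    unfold adjSum
    simp only [← Finset.sum_sub_distrib, ovl_self ν N Nv hNv hle, hG]
    refine Finset.sum_congr rfl fun x _ => Finset.sum_congr rfl fun y _ => ?_
    split_ifs <;> ring
  simp only [hpt]
  have hint : ∀ x y, ∫ ξ, ∫ η, gibbs2 ν N Nv α q β t b ξ η (G x y) ∂(μF ν N) ∂(μW ν N) =
      ∫ g, gibbs2 ν N Nv α q β t b (emap ν N g).1 (emap ν N g).2 (G x y) ∂(PG (II ν N)) :=
    fun x y => int_emap ν N (fun ξ η => gibbs2 ν N Nv α q β t b ξ η (G x y))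
      (cont_gibbs ν N Nv α q β t b _) (int_gibbs ν N Nv α q β t b _)
  have hint2 : ∀ x y : Fin ν, Integrable (fun g => if (y : ℕ) = (x : ℕ) + 1 then (α x * α y) *
        gibbs2 ν N Nv α q β t b (emap ν N g).1 (emap ν N g).2 (G x y) else 0) (PG (II ν N)) := by
    intro x y
    split_ifs
    · exact (int_gibbs ν N Nv α q β t b _).const_mul _
    · exact integrable_const _
  have hadj : Integrable (fun g => adjSum ν (fun x y => (α x * α y) *
        gibbs2 ν N Nv α q β t b (emap ν N g).1 (emap ν N g).2 (G x y))) (PG (II ν N)) := by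
    unfold adjSum
    exact integrable_finsetSum _ fun x _ => integrable_finsetSum _ fun y _ => hint2 x y
  have hadj2 : ∫ g, adjSum ν (fun x y => (α x * α y) *
        gibbs2 ν N Nv α q β t b (emap ν N g).1 (emap ν N g).2 (G x y)) ∂(PG (II ν N)) =
      adjSum ν (fun x y => α x * α y *
        ∫ ξ, ∫ η, gibbs2 ν N Nv α q β t b ξ η (G x y) ∂(μF ν N) ∂(μW ν N)) := by
    unfold adjSum
    rw [integral_finsetSum _ fun x _ => integrable_finsetSum _ fun y _ => hint2 x y]
    refine Finset.sum_congr rfl fun x _ => ?_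
    rw [integral_finsetSum _ fun y _ => hint2 x y]
    refine Finset.sum_congr rfl fun y _ => ?_
    split_ifs
    · rw [integral_const_mul, ← hint]
    · simp
  change _ = β ^ 2 / 2 * A - β ^ 2 / 2 * adjSum ν (fun x y => α x * α y *
        ∫ ξ, ∫ η, gibbs2 ν N Nv α q β t b ξ η (G x y) ∂(μF ν N) ∂(μW ν N))
  rw [integral_sub (integrable_const _) (hadj.const_mul _), integral_const, integral_const_mul, hadj2]
  simp only [probReal_univ, smul_eq_mul, one_mul]
  field_simp

end DRBM
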